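/- (Theorem 4.1(i).) Fix x̄ ∈ K, ε, λ > 0. Suppose f and h satisfy conditions (L1)–(L4) on K, x ↦ ∇₁d(x,x̄) is continuous and monotone on K, and condition (L6) holds for g = ε f + h. Then the solution set S(f̄,K) of the regularized equilibrium problem is nonempty: there exists u ∈ K with f̄(u,y) ≥ 0 for all y ∈ K. -/

import Mathlib

/-!
The regularized bifunction `φ = fbar` is itself a monotone equilibrium bifunction: it vanishes on the
diagonal, `φ x y + φ y x ≤ 0`, it is convex and lower semicontinuous in the second variable and upper
semicontinuous in the first. Because of monotonicity, no fixed-point or KKM theorem is needed.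

On a compact convex set, one looks for a Minty solution, a point of every set
`{x ∈ K | φ y x ≤ 0}`. These sets are closed, so finitely many points `y i` may be considered. By
convexity it suffices to find weights `w` in the simplex with `A w ≤ 0`, where `A i j = φ (y i) (y j)`.
As `A + Aᵀ ≤ 0` entrywise, `p ⬝ A p ≤ 0` for every `p ≥ 0`, and separating `{A w}` from the
nonpositive orthant gives such weights (`exists_weights`). A Minty solution is a solution by upper
semicontinuity along segments (`exists_solution_of_isCompact`).

In general, monotonicity and (L6) give `φ y xbar < 0` for all `y ∈ K` of norm at least some `R`. The
solution on `K ∩ closedBall 0 R'`, with `R' ≥ R` and `R' ≥ ‖xbar‖`, therefore has norm less than `R`,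
and convexity extends the inequality from the ball to all of `K` (`exists_solution_of_coercive`).
-/

open scoped RealInnerProductSpace
open Filter


/-- If `A + Aᵀ ≤ 0` entrywise, some probability vector `w` satisfies `A w ≤ 0`: the matrix game
with payoff `A` has nonpositive value. -/
lemma exists_weights {ι : Type*} [Fintype ι] [Nonempty ι] (A : ι → ι → ℝ)
    (hA : ∀ i j, A i j + A j i ≤ 0) :
    ∃ w ∈ stdSimplex ℝ ι, ∀ i, ∑ j, w j * A i j ≤ 0 := by
  classical
  by_contra! hcon
  let T : (ι → ℝ) →ₗ[ℝ] (ι → ℝ) := Matrix.toLin' (Matrix.of A)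
  have hT : ∀ w i, T w i = ∑ j, w j * A i j := by
    intro w i
    simp [T, Matrix.toLin'_apply, Matrix.mulVec, dotProduct, mul_comm]
  have hTc : Continuous T := T.continuous_of_finiteDimensional
  have hdisj : Disjoint (T '' stdSimplex ℝ ι) (Set.Iic (0 : ι → ℝ)) := by
    rw [Set.disjoint_left]
    rintro _ ⟨w, hw, rfl⟩ hle
    obtain ⟨i, hi⟩ := hcon w hw
    have := hle i
    rw [hT] at this
    simp only [Pi.zero_apply] at this
    linarith
  obtain ⟨F, u, v, hFu, huv, hFv⟩ := geometric_hahn_banach_compact_closed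
    ((convex_stdSimplex ℝ ι).linear_image T) ((isCompact_stdSimplex ℝ ι).image hTc)
    (convex_Iic (0 : ι → ℝ)) isClosed_Iic hdisj
  have hv0 : v < 0 := by simpa using hFv 0 (Set.mem_Iic.2 le_rfl)
  have hF : ∀ x : ι → ℝ, F x = ∑ i, x i * F (Pi.single i 1) := by
    intro x
    conv_lhs => rw [pi_eq_sum_univ' x]
    simp [map_sum]
  set q : ι → ℝ := fun i => - F (Pi.single i 1) with hq
  -- `F` is bounded below on the cone of nonpositive vectors, hence nonnegative there.
  have hq0 : ∀ i, 0 ≤ q i := by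
    intro i
    by_contra! hneg
    have hpos : 0 < F (Pi.single i 1) := by simp only [hq] at hneg; linarith
    have hmem : (v / F (Pi.single i 1)) • (Pi.single i 1 : ι → ℝ) ∈ Set.Iic (0 : ι → ℝ) := by
      intro j
      have h1 : (0 : ℝ) ≤ (Pi.single i 1 : ι → ℝ) j := by
        by_cases hij : j = i
        · subst hij; simp
        · simp [hij]
      simpa using mul_nonpos_of_nonpos_of_nonneg (div_neg_of_neg_of_pos hv0 hpos).le h1
    have := hFv _ hmem
    rw [map_smul, smul_eq_mul, div_mul_cancel₀ _ hpos.ne'] at this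
    exact lt_irrefl _ this
  have hs : 0 < ∑ i, q i := by
    refine (Finset.sum_nonneg fun i _ => hq0 i).lt_of_ne' fun h0 => ?_
    have hz := (Finset.sum_eq_zero_iff_of_nonneg fun i _ => hq0 i).1 h0
    have hFz : ∀ x, F x = 0 := by
      intro x
      rw [hF]
      refine Finset.sum_eq_zero fun i hi => ?_
      have := hz i hi
      simp only [hq, neg_eq_zero] at this
      rw [this, mul_zero]
    have hw := single_mem_stdSimplex ℝ (Classical.arbitrary ι)
    have := hFu _ ⟨_, hw, rfl⟩
    rw [hFz] at this
    linarith
  set s := ∑ i, q i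
  have hmem : (fun i => s⁻¹ * q i) ∈ stdSimplex ℝ ι := by
    refine ⟨fun i => mul_nonneg (inv_nonneg.2 hs.le) (hq0 i), ?_⟩
    rw [← Finset.mul_sum]
    exact inv_mul_cancel₀ hs.ne'
  have h1 := hFu _ ⟨_, hmem, rfl⟩
  rw [hF] at h1
  have h2 : ∑ i, T (fun i => s⁻¹ * q i) i * F (Pi.single i 1)
      = - (s⁻¹ * ∑ i, ∑ j, q i * q j * A i j) := by
    rw [Finset.mul_sum, ← Finset.sum_neg_distrib]
    refine Finset.sum_congr rfl fun i _ => ?_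
    rw [hT, Finset.mul_sum, Finset.sum_mul, ← Finset.sum_neg_distrib]
    refine Finset.sum_congr rfl fun j _ => ?_
    simp only [hq]
    ring
  have h3 : ∑ i, ∑ j, q i * q j * A i j ≤ 0 := by
    have hswap : ∑ i, ∑ j, q i * q j * A i j = ∑ i, ∑ j, q i * q j * A j i := by
      rw [Finset.sum_comm]
      refine Finset.sum_congr rfl fun i _ => Finset.sum_congr rfl fun j _ => by ring
    have hadd : ∑ i, ∑ j, q i * q j * A i j + ∑ i, ∑ j, q i * q j * A j i ≤ 0 := by
      rw [← Finset.sum_add_distrib]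
      refine Finset.sum_nonpos fun i _ => ?_
      rw [← Finset.sum_add_distrib]
      refine Finset.sum_nonpos fun j _ => ?_
      rw [← mul_add]
      exact mul_nonpos_of_nonneg_of_nonpos (mul_nonneg (hq0 i) (hq0 j)) (hA i j)
    linarith
  have h4 := mul_nonpos_of_nonneg_of_nonpos (inv_nonneg.2 hs.le) h3
  linarith

/-- A monotone equilibrium problem on a compact convex set has a solution. -/
lemma exists_solution_of_isCompact {E : Type*} [NormedAddCommGroup E] [NormedSpace ℝ E]
    {K : Set E} (hne : K.Nonempty) (hK : IsCompact K) (hconv : Convex ℝ K) {φ : E → E → ℝ}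
    (h0 : ∀ x ∈ K, φ x x = 0)
    (husc : ∀ y ∈ K, UpperSemicontinuousOn (fun x => φ x y) K)
    (hcvx : ∀ x ∈ K, ConvexOn ℝ K (φ x))
    (hlsc : ∀ x ∈ K, LowerSemicontinuousOn (φ x) K)
    (hmono : ∀ x ∈ K, ∀ y ∈ K, φ x y + φ y x ≤ 0) :
    ∃ u ∈ K, ∀ y ∈ K, 0 ≤ φ u y := by
  have hM : (K ∩ ⋂ y : K, K ∩ φ y ⁻¹' Set.Iic 0).Nonempty := by
    refine hK.inter_iInter_nonempty _ (fun y => ?_) fun t => ?_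
    · obtain ⟨v, hv, hKv⟩ := (lowerSemicontinuousOn_iff_preimage_Iic.1 (hlsc y y.2)) 0
      rw [hKv]
      exact hK.isClosed.inter hv
    · rcases t.eq_empty_or_nonempty with rfl | ht
      · simpa using hne
      have : Nonempty t := ht.to_subtype
      obtain ⟨w, hw, hle⟩ := exists_weights (fun i j : t => φ i.1 j.1)
        fun i j => hmono _ i.1.2 _ j.1.2
      have hx : ∑ j, w j • (j.1.1 : E) ∈ K :=
        hconv.sum_mem (fun i _ => hw.1 i) hw.2 fun i _ => i.1.2
      refine ⟨_, hx, Set.mem_iInter₂.2 fun y hy => ⟨hx, ?_⟩⟩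
      have h1 := (hcvx y y.2).map_sum_le (t := Finset.univ) (w := w) (p := fun j : t => (j.1.1 : E))
        (fun i _ => hw.1 i) hw.2 fun i _ => i.1.2
      exact h1.trans (by simpa using hle ⟨y, hy⟩)
  obtain ⟨x, hx, hxM⟩ := hM
  have hminty : ∀ y ∈ K, φ y x ≤ 0 := fun y hy => (Set.mem_iInter.1 hxM ⟨y, hy⟩).2
  refine ⟨x, hx, fun y hy => ?_⟩
  by_contra! hneg
  have hlim : Tendsto (fun t : ℝ => (1 - t) • x + t • y) (nhdsWithin 0 (Set.Ioo 0 1))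
      (nhdsWithin x K) := by
    refine tendsto_nhdsWithin_iff.2 ⟨?_, ?_⟩
    · have hc : Continuous fun t : ℝ => (1 - t) • x + t • y := by fun_prop
      have := hc.tendsto 0
      simp only [sub_zero, one_smul, zero_smul, add_zero] at this
      exact this.mono_left nhdsWithin_le_nhds
    · filter_upwards [self_mem_nhdsWithin] with t ht
      exact hconv hx hy (by linarith [ht.2]) ht.1.le (by ring)
  have : (nhdsWithin (0 : ℝ) (Set.Ioo 0 1)).NeBot := left_nhdsWithin_Ioo_neBot one_pos
  obtain ⟨t, ht, ht01⟩ := ((hlim.eventually (husc y hy x hx 0 hneg)).and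
    self_mem_nhdsWithin).exists
  -- On the segment, `0 = φ z z ≤ (1 - t) φ z x + t φ z y` with both terms nonpositive, the last negative.
  set z := (1 - t) • x + t • y with hz
  have hzK : z ∈ K := hconv hx hy (by linarith [ht01.2]) ht01.1.le (by ring)
  have h1 := (hcvx z hzK).2 hx hy (by linarith [ht01.2] : (0 : ℝ) ≤ 1 - t) ht01.1.le (by ring)
  rw [← hz, h0 z hzK, smul_eq_mul, smul_eq_mul] at h1
  have h2 := mul_nonpos_of_nonneg_of_nonpos (by linarith [ht01.2] : (0 : ℝ) ≤ 1 - t) (hminty z hzK)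
  have h3 := mul_neg_of_pos_of_neg ht01.1 ht
  linarith

/-- In a proper space compactness may be replaced by coercivity at one point `x₀` of `K`. -/
lemma exists_solution_of_coercive {E : Type*} [NormedAddCommGroup E] [NormedSpace ℝ E]
    [ProperSpace E] {K : Set E} (hcl : IsClosed K) (hconv : Convex ℝ K) {φ : E → E → ℝ}
    (h0 : ∀ x ∈ K, φ x x = 0)
    (husc : ∀ y ∈ K, UpperSemicontinuousOn (fun x => φ x y) K)
    (hcvx : ∀ x ∈ K, ConvexOn ℝ K (φ x))
    (hlsc : ∀ x ∈ K, LowerSemicontinuousOn (φ x) K)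
    (hmono : ∀ x ∈ K, ∀ y ∈ K, φ x y + φ y x ≤ 0)
    {x₀ : E} (hx₀ : x₀ ∈ K) {R : ℝ} (hR : ∀ y ∈ K, R ≤ ‖y‖ → φ y x₀ < 0) :
    ∃ u ∈ K, ∀ y ∈ K, 0 ≤ φ u y := by
  set B := Metric.closedBall (0 : E) (max R ‖x₀‖)
  have hsub : K ∩ B ⊆ K := Set.inter_subset_left
  have hcB : Convex ℝ (K ∩ B) := hconv.inter (convex_closedBall _ _)
  have hx₀B : x₀ ∈ K ∩ B := ⟨hx₀, by simp [B]⟩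
  obtain ⟨u, ⟨huK, -⟩, hu⟩ := exists_solution_of_isCompact (K := K ∩ B) (φ := φ) ⟨x₀, hx₀B⟩
    ((isCompact_closedBall _ _).inter_left hcl) hcB
    (fun x hx => h0 x hx.1) (fun y hy => (husc y hy.1).mono hsub)
    (fun x hx => (hcvx x hx.1).subset hsub hcB) (fun x hx => (hlsc x hx.1).mono hsub)
    (fun x hx y hy => hmono x hx.1 y hy.1)
  have huR : ‖u‖ < R := by
    by_contra! hle
    exact absurd (hu x₀ hx₀B) (not_le.2 (hR u huK hle))
  refine ⟨u, huK, fun y hy => ?_⟩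
  have hlim : Tendsto (fun t : ℝ => ‖(1 - t) • u + t • y‖) (nhdsWithin 0 (Set.Ioo 0 1))
      (nhds ‖u‖) := by
    have hc : Continuous fun t : ℝ => ‖(1 - t) • u + t • y‖ := by fun_prop
    have := hc.tendsto 0
    simp only [sub_zero, one_smul, zero_smul, add_zero] at this
    exact this.mono_left nhdsWithin_le_nhds
  have : (nhdsWithin (0 : ℝ) (Set.Ioo 0 1)).NeBot := left_nhdsWithin_Ioo_neBot one_pos
  obtain ⟨t, ht, ht01⟩ := ((hlim.eventually (gt_mem_nhds huR)).and self_mem_nhdsWithin).exists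
  have h1t : (0 : ℝ) ≤ 1 - t := by linarith [ht01.2]
  have hzK := hconv huK hy h1t ht01.1.le (by ring)
  have h1 := hu _ ⟨hzK, by simpa [B] using Or.inl ht.le⟩
  have h2 := (hcvx u huK).2 huK hy h1t ht01.1.le (by ring)
  rw [h0 u huK, smul_zero, zero_add, smul_eq_mul] at h2
  exact nonneg_of_mul_nonneg_right (h1.trans h2) ht01.1

/-- Theorem 4.1(i): under (L1)–(L4) for `f` and `h`, continuity and monotonicity of
`∇₁d(·,x̄)` on `K`, and condition (L6) for `g = ε f + h`, the regularized equilibrium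
problem `S(f̄,K)` has a solution. -/
theorem theorem41_i (n : ℕ)
    (K : Set (EuclideanSpace ℝ (Fin n))) (hKne : K.Nonempty)
    (hKcl : IsClosed K) (hKconv : Convex ℝ K)
    (f h : EuclideanSpace ℝ (Fin n) → EuclideanSpace ℝ (Fin n) → ℝ)
    (xbar : EuclideanSpace ℝ (Fin n)) (hxbar : xbar ∈ K)
    (ε lam : ℝ) (hε : 0 < ε) (hlam : 0 < lam)
    (d : EuclideanSpace ℝ (Fin n) → EuclideanSpace ℝ (Fin n) → ℝ)
    (gd : EuclideanSpace ℝ (Fin n) → EuclideanSpace ℝ (Fin n))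
    (U : Set (EuclideanSpace ℝ (Fin n))) (hU : IsOpen U) (hKU : K ⊆ U)
    (hgrad : ∀ x ∈ U, HasGradientAt (fun u => d u xbar) (gd x) x)
    (hgdcont : ContinuousOn gd K)
    (hgdmono : ∀ x ∈ K, ∀ y ∈ K, 0 ≤ ⟪gd y - gd x, y - x⟫)
    -- (L1)–(L4) for f
    (hfL1 : ∀ x ∈ K, f x x = 0)
    (hfL2 : ∀ y ∈ K, UpperSemicontinuousOn (fun x => f x y) K)
    (hfL3conv : ∀ x ∈ K, ConvexOn ℝ K (f x))
    (hfL3lsc : ∀ x ∈ K, LowerSemicontinuousOn (f x) K)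
    (hfL4 : ∀ x ∈ K, ∀ y ∈ K, f x y + f y x ≤ 0)
    -- (L1)–(L4) for h
    (hhL1 : ∀ x ∈ K, h x x = 0)
    (hhL2 : ∀ y ∈ K, UpperSemicontinuousOn (fun x => h x y) K)
    (hhL3conv : ∀ x ∈ K, ConvexOn ℝ K (h x))
    (hhL3lsc : ∀ x ∈ K, LowerSemicontinuousOn (h x) K)
    (hhL4 : ∀ x ∈ K, ∀ y ∈ K, h x y + h y x ≤ 0)
    -- Condition (L6) for g = ε f + h
    (hL6 : ∀ y : ℕ → EuclideanSpace ℝ (Fin n), (∀ m, y m ∈ K) →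
      Tendsto (fun m => ‖y m‖) atTop atTop →
      ∃ c > 0, ∀ᶠ m in atTop,
        c ≤ (ε * f xbar (y m) + h xbar (y m)) + lam⁻¹ * ⟪gd (y m), y m - xbar⟫)
    -- the regularized bifunction
    (fbar : EuclideanSpace ℝ (Fin n) → EuclideanSpace ℝ (Fin n) → ℝ)
    (hfbar : ∀ x y, fbar x y = ε * f x y + h x y + (1 / lam) * ⟪gd x, y - x⟫) :
    ∃ u ∈ K, ∀ y ∈ K, 0 ≤ fbar u y := by
  have hlam' : 0 < 1 / lam := one_div_pos.2 hlam
  have hmono : ∀ x ∈ K, ∀ y ∈ K, fbar x y + fbar y x ≤ 0 := by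
    intro x hx y hy
    have h1 := mul_nonpos_of_nonneg_of_nonpos hε.le (hfL4 x hx y hy)
    have h2 := hhL4 x hx y hy
    have h3 := mul_nonneg hlam'.le (hgdmono x hx y hy)
    have h4 : ⟪gd y - gd x, y - x⟫ = - ⟪gd x, y - x⟫ - ⟪gd y, x - y⟫ := by
      rw [inner_sub_left, ← neg_sub y x, inner_neg_right]
      ring
    rw [h4] at h3
    rw [hfbar, hfbar]
    linarith
  have hcoer : ∃ R : ℝ, ∀ y ∈ K, R ≤ ‖y‖ → fbar y xbar < 0 := by
    by_contra! hcon
    choose y hyK hyn hy0 using fun m : ℕ => hcon m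
    obtain ⟨c, hc, hev⟩ := hL6 y hyK (tendsto_atTop_mono hyn tendsto_natCast_atTop_atTop)
    obtain ⟨m, hm⟩ := hev.exists
    -- (L6) involves `f xbar (y m)`; monotonicity turns it into a bound on `f (y m) xbar`.
    have h1 := mul_nonpos_of_nonneg_of_nonpos hε.le (hfL4 xbar hxbar (y m) (hyK m))
    have h2 := hhL4 xbar hxbar (y m) (hyK m)
    have h3 := hy0 m
    rw [hfbar, ← neg_sub (y m) xbar, inner_neg_right, one_div] at h3
    linarith
  obtain ⟨R, hR⟩ := hcoer
  refine exists_solution_of_coercive hKcl hKconv (φ := fbar) ?_ ?_ ?_ ?_ hmono hxbar hR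
  · intro x hx
    simp [hfbar, hfL1 x hx, hhL1 x hx]
  · intro y hy
    have hε' : UpperSemicontinuousOn (fun x => ε * f x y) K :=
      (continuous_const_mul ε).comp_upperSemicontinuousOn (hfL2 y hy)
        (monotone_mul_left_of_nonneg hε.le)
    have hc : ContinuousOn (fun x => (1 / lam) * ⟪gd x, y - x⟫) K := by fun_prop
    simpa only [hfbar] using (hε'.add (hhL2 y hy)).add hc.upperSemicontinuousOn
  · intro x hx
    have hlin : ConvexOn ℝ K fun y => (1 / lam) * ⟪gd x, y - x⟫ := by
      refine ⟨hKconv, fun a _ b _ s t _ _ hst => le_of_eq ?_⟩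
      simp only [inner_sub_right, inner_add_right, inner_smul_right, smul_eq_mul]
      linear_combination (1 / lam * ⟪gd x, x⟫) * hst
    have := (((hfL3conv x hx).smul hε.le).add (hhL3conv x hx)).add hlin
    rw [show fbar x = _ from funext (hfbar x)]
    exact this
  · intro x hx
    have hε' : LowerSemicontinuousOn (fun y => ε * f x y) K :=
      (continuous_const_mul ε).comp_lowerSemicontinuousOn (hfL3lsc x hx)
        (monotone_mul_left_of_nonneg hε.le)
    have hc : ContinuousOn (fun y => (1 / lam) * ⟪gd x, y - x⟫) K := by fun_prop
    rw [show fbar x = _ from funext (hfbar x)]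
    exact (hε'.add (hhL3lsc x hx)).add hc.lowerSemicontinuousOn
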